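/- Let m ≥ 10 and a ∈ [ √(2 log 2)/m, 1 ] with 1 ≥ a + 2/m. Let ν(x) = (2π)^{−1/2} e^{−x²/2}, and π(x) = (1 − e^{−a²m²/2}) g_m(x) + e^{−a²m²/2} u_m(x), where g_m(x) = (2π)^{−1/2} e^{−(x−m)²/2} and u_m(x) = e^{−d(x,[−m,2m])²/2} / (3m + √(2π)). Then for every λ ∈ [0,1], ∫_{−∞}^{m(1−a)/2} ν(x)^{1−λ} π(x)^λ dx ≥ e^{−λ a² m²/2} / (10 m). -/

import Mathlib

/-!
Only the smoothed uniform component of `π` matters. When `a ≤ 1`, the interval `[-1, 0]` lies to the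
left of `m(1 - a)/2` and inside `[-m, 2m]`. There `ν ≥ c` and `π ≥ w c`, with `c = 1/(10m)` and
`w = e^{-a²m²/2}`, so `ν^{1-λ} π^λ ≥ c^{1-λ} (w c)^λ = w^λ c` pointwise, and integrating over this
interval of length one gives the bound.
-/

open MeasureTheory Real

/-- The standard Gaussian density on ℝ. -/
noncomputable def stdGauss (x : ℝ) : ℝ := Real.exp (-x ^ 2 / 2) / Real.sqrt (2 * Real.pi)

/-- The density of N(m, 1). -/
noncomputable def gaussAt (m x : ℝ) : ℝ := Real.exp (-(x - m) ^ 2 / 2) / Real.sqrt (2 * Real.pi)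

/-- The smoothed uniform density on [−m, 2m]. -/
noncomputable def smUnif (m x : ℝ) : ℝ :=
  Real.exp (-(Metric.infDist x (Set.Icc (-m) (2 * m))) ^ 2 / 2) / (3 * m + Real.sqrt (2 * Real.pi))

/-- The general unimodal target π = (1 − e^{−a²m²/2}) N(m,1) + e^{−a²m²/2} u_m. -/
noncomputable def piDensA (m a x : ℝ) : ℝ :=
  (1 - Real.exp (-(a ^ 2 * m ^ 2) / 2)) * gaussAt m x
    + Real.exp (-(a ^ 2 * m ^ 2) / 2) * smUnif m x

section GeometricMean

lemma rpow_mul_le_rpow_one_sub_mul_rpow {c w u v p : ℝ} (hc : 0 ≤ c) (hw : 0 ≤ w)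
    (hp : p ∈ Set.Icc 0 1) (hu : c ≤ u) (hv : w * c ≤ v) :
    w ^ p * c ≤ u ^ (1 - p) * v ^ p := by
  obtain ⟨hp0, hp1⟩ := hp
  have hq0 : 0 ≤ 1 - p := sub_nonneg.mpr hp1
  calc
    w ^ p * c = w ^ p * (c ^ (1 - p) * c ^ p) := by
      rw [← rpow_add_of_nonneg hc hq0 hp0, sub_add_cancel, rpow_one]
    _ = c ^ (1 - p) * (w * c) ^ p := by rw [mul_rpow hw hc, mul_left_comm]
    _ ≤ u ^ (1 - p) * v ^ p := by gcongr; exact rpow_nonneg (hc.trans hu) _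

variable {α : Type*} [MeasurableSpace α] {μ : Measure α} {f g : α → ℝ} {p : ℝ}

lemma integrable_rpow_one_sub_mul_rpow (hf : Integrable f μ) (hg : Integrable g μ)
    (hf0 : 0 ≤ᵐ[μ] f) (hg0 : 0 ≤ᵐ[μ] g) (hp : p ∈ Set.Icc 0 1) :
    Integrable (fun x ↦ f x ^ (1 - p) * g x ^ p) μ := by
  obtain ⟨hp0, hp1⟩ := hp
  refine ((hf.const_mul (1 - p)).add (hg.const_mul p)).mono'
    ((hf.aemeasurable.pow_const _).mul (hg.aemeasurable.pow_const _)).aestronglyMeasurable ?_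
  filter_upwards [hf0, hg0] with x hfx hgx
  rw [norm_of_nonneg (mul_nonneg (rpow_nonneg hfx _) (rpow_nonneg hgx _))]
  exact geom_mean_le_arith_mean2_weighted (sub_nonneg.mpr hp1) hp0 hfx hgx (sub_add_cancel 1 p)

lemma rpow_mul_measureReal_le_setIntegral_rpow_one_sub_mul_rpow {s t : Set α} {c w : ℝ}
    (hs : MeasurableSet s) (hμs : μ s ≠ ⊤) (hst : s ⊆ t)
    (hf : IntegrableOn f t μ) (hg : IntegrableOn g t μ)
    (hf0 : 0 ≤ᵐ[μ.restrict t] f) (hg0 : 0 ≤ᵐ[μ.restrict t] g) (hp : p ∈ Set.Icc 0 1)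
    (hc : 0 ≤ c) (hw : 0 ≤ w) (hcf : ∀ x ∈ s, c ≤ f x) (hcg : ∀ x ∈ s, w * c ≤ g x) :
    w ^ p * c * μ.real s ≤ ∫ x in t, f x ^ (1 - p) * g x ^ p ∂μ := by
  have h_int : IntegrableOn (fun x ↦ f x ^ (1 - p) * g x ^ p) t μ :=
    integrable_rpow_one_sub_mul_rpow hf hg hf0 hg0 hp
  have h_nonneg : 0 ≤ᵐ[μ.restrict t] fun x ↦ f x ^ (1 - p) * g x ^ p := by
    filter_upwards [hf0, hg0] with x hfx hgx
    exact mul_nonneg (rpow_nonneg hfx _) (rpow_nonneg hgx _)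
  calc
    w ^ p * c * μ.real s ≤ ∫ x in s, f x ^ (1 - p) * g x ^ p ∂μ :=
      setIntegral_ge_of_const_le_real hs hμs
        (fun x hx ↦ rpow_mul_le_rpow_one_sub_mul_rpow hc hw hp (hcf x hx) (hcg x hx))
        (h_int.mono_set hst)
    _ ≤ ∫ x in t, f x ^ (1 - p) * g x ^ p ∂μ :=
      setIntegral_mono_set h_int h_nonneg hst.eventuallyLE

end GeometricMean

section GaussianTails

variable {V : Type*} [NormedAddCommGroup V] [InnerProductSpace ℝ V] [FiniteDimensional ℝ V]
  [MeasurableSpace V] [BorelSpace V]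

lemma integrable_exp_neg_mul_norm_sq {b : ℝ} (hb : 0 < b) :
    Integrable fun x : V ↦ exp (-b * ‖x‖ ^ 2) := by
  have h := (GaussianFourier.integrable_cexp_neg_mul_sq_norm_add
    (b := (b : ℂ)) (by simpa using hb) 0 (0 : V)).norm
  refine h.congr (.of_forall fun x ↦ ?_)
  simp [Complex.norm_exp, ← Complex.ofReal_pow]

lemma integrable_exp_neg_mul_infDist_sq {s : Set V} (hs : Bornology.IsBounded s)
    (hs_nonempty : s.Nonempty) {b : ℝ} (hb : 0 < b) :
    Integrable fun x ↦ exp (-b * Metric.infDist x s ^ 2) := by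
  obtain ⟨y, hy⟩ := hs_nonempty
  have h_dom : Integrable fun x ↦ exp (b * Metric.diam s ^ 2) * exp (-(b / 2) * ‖x - y‖ ^ 2) :=
    ((integrable_exp_neg_mul_norm_sq (half_pos hb)).comp_sub_right y).const_mul _
  have h_cont : Continuous fun x ↦ exp (-b * Metric.infDist x s ^ 2) := by
    have := Metric.continuous_infDist_pt s
    fun_prop
  refine h_dom.mono' h_cont.aestronglyMeasurable (.of_forall fun x ↦ ?_)
  rw [norm_of_nonneg (exp_pos _).le, ← exp_add, exp_le_exp]
  have h_sq : ‖x - y‖ ^ 2 ≤ 2 * (Metric.infDist x s ^ 2 + Metric.diam s ^ 2) :=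
    calc
      ‖x - y‖ ^ 2 ≤ (Metric.infDist x s + Metric.diam s) ^ 2 := by
        gcongr
        simpa only [dist_eq_norm] using Metric.dist_le_infDist_add_diam hs hy
      _ ≤ 2 * (Metric.infDist x s ^ 2 + Metric.diam s ^ 2) := add_sq_le
  linarith [mul_le_mul_of_nonneg_left h_sq hb.le]

end GaussianTails

section Densities

variable {m : ℝ}

lemma gaussAt_eq_gaussianPDFReal (m : ℝ) : gaussAt m = ProbabilityTheory.gaussianPDFReal m 1 := by
  ext x
  simp [gaussAt, ProbabilityTheory.gaussianPDFReal, div_eq_inv_mul]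

lemma gaussAt_nonneg (m x : ℝ) : 0 ≤ gaussAt m x := by
  rw [gaussAt_eq_gaussianPDFReal]
  exact ProbabilityTheory.gaussianPDFReal_nonneg m 1 x

lemma integrable_gaussAt (m : ℝ) : Integrable (gaussAt m) := by
  rw [gaussAt_eq_gaussianPDFReal]
  exact ProbabilityTheory.integrable_gaussianPDFReal m 1

lemma stdGauss_eq_gaussAt_zero : stdGauss = gaussAt 0 := by
  ext x
  simp [stdGauss, gaussAt]

lemma stdGauss_nonneg (x : ℝ) : 0 ≤ stdGauss x := by
  simpa only [stdGauss_eq_gaussAt_zero] using gaussAt_nonneg 0 x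

lemma integrable_stdGauss : Integrable stdGauss := by
  simpa only [stdGauss_eq_gaussAt_zero] using integrable_gaussAt 0

lemma sqrt_two_mul_pi_le_three : √(2 * π) ≤ 3 := by
  rw [sqrt_le_left zero_le_three]
  linarith [pi_lt_four]

lemma one_sixth_le_stdGauss {x : ℝ} (hx : |x| ≤ 1) : 1 / 6 ≤ stdGauss x := by
  have h_exp : 1 / 2 ≤ exp (-x ^ 2 / 2) := by
    linarith [add_one_le_exp (-x ^ 2 / 2), (sq_le_one_iff_abs_le_one x).mpr hx]
  calc
    (1 / 6 : ℝ) = 1 / 2 / 3 := by norm_num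
    _ ≤ stdGauss x := div_le_div₀ (exp_pos _).le h_exp (by positivity) sqrt_two_mul_pi_le_three

lemma smUnif_nonneg (hm : 0 ≤ m) (x : ℝ) : 0 ≤ smUnif m x := by
  unfold smUnif
  positivity

lemma integrable_smUnif (hm : 0 ≤ m) : Integrable (smUnif m) := by
  have h_nonempty : (Set.Icc (-m) (2 * m)).Nonempty := Set.nonempty_Icc.mpr (by linarith)
  refine ((integrable_exp_neg_mul_infDist_sq (Metric.isBounded_Icc _ _) h_nonempty
    one_half_pos).div_const (3 * m + √(2 * π))).congr (.of_forall fun x ↦ ?_)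
  simp only [smUnif]
  ring_nf

lemma smUnif_of_mem_Icc {x : ℝ} (hx : x ∈ Set.Icc (-m) (2 * m)) :
    smUnif m x = 1 / (3 * m + √(2 * π)) := by
  simp [smUnif, Metric.infDist_zero_of_mem hx]

lemma one_div_ten_mul_le_smUnif {x : ℝ} (hm : 1 ≤ m) (hx : x ∈ Set.Icc (-m) (2 * m)) :
    1 / (10 * m) ≤ smUnif m x := by
  rw [smUnif_of_mem_Icc hx]
  gcongr
  linarith [sqrt_two_mul_pi_le_three]

lemma exp_neg_sq_mul_sq_div_two_le_one (a m : ℝ) : exp (-(a ^ 2 * m ^ 2) / 2) ≤ 1 := by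
  rw [exp_le_one_iff]
  linarith [mul_nonneg (sq_nonneg a) (sq_nonneg m)]

lemma exp_mul_smUnif_le_piDensA (m a x : ℝ) :
    exp (-(a ^ 2 * m ^ 2) / 2) * smUnif m x ≤ piDensA m a x :=
  le_add_of_nonneg_left <|
    mul_nonneg (sub_nonneg.mpr (exp_neg_sq_mul_sq_div_two_le_one a m)) (gaussAt_nonneg m x)

lemma piDensA_nonneg (hm : 0 ≤ m) (a x : ℝ) : 0 ≤ piDensA m a x :=
  (mul_nonneg (exp_pos _).le (smUnif_nonneg hm x)).trans (exp_mul_smUnif_le_piDensA m a x)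

lemma integrable_piDensA (hm : 0 ≤ m) (a : ℝ) : Integrable (piDensA m a) :=
  ((integrable_gaussAt m).const_mul _).add ((integrable_smUnif hm).const_mul _)

end Densities

theorem unimodal_tempering_left_unnormalized_mass_lower_bound_general
    (m a : ℝ) (hm : 1 ≤ m) (ha : a ≤ 1) (lam : ℝ) (hlam : lam ∈ Set.Icc (0 : ℝ) 1) :
    exp (-(lam * a ^ 2 * m ^ 2) / 2) / (10 * m)
      ≤ ∫ x in Set.Iic (m * (1 - a) / 2), stdGauss x ^ (1 - lam) * piDensA m a x ^ lam := by
  have hm0 : 0 ≤ m := by linarith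
  have h_threshold : 0 ≤ m * (1 - a) / 2 :=
    div_nonneg (mul_nonneg hm0 (sub_nonneg.mpr ha)) zero_le_two
  have h_gauss : ∀ x ∈ Set.Icc (-1 : ℝ) 0, 1 / (10 * m) ≤ stdGauss x := fun x hx ↦
    calc
      1 / (10 * m) ≤ 1 / 6 := by gcongr; linarith
      _ ≤ stdGauss x := one_sixth_le_stdGauss (abs_le.mpr ⟨hx.1, hx.2.trans zero_le_one⟩)
  have h_pi : ∀ x ∈ Set.Icc (-1 : ℝ) 0,
      exp (-(a ^ 2 * m ^ 2) / 2) * (1 / (10 * m)) ≤ piDensA m a x := fun x hx ↦ by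
    refine le_trans ?_ (exp_mul_smUnif_le_piDensA m a x)
    gcongr
    exact one_div_ten_mul_le_smUnif hm ⟨by linarith [hx.1], by linarith [hx.2]⟩
  have h_subset : Set.Icc (-1 : ℝ) 0 ⊆ Set.Iic (m * (1 - a) / 2) := fun x hx ↦
    hx.2.trans h_threshold
  calc
    exp (-(lam * a ^ 2 * m ^ 2) / 2) / (10 * m)
        = exp (-(a ^ 2 * m ^ 2) / 2) ^ lam * (1 / (10 * m)) * volume.real (Set.Icc (-1 : ℝ) 0) := by
      rw [← exp_mul, volume_real_Icc_of_le (by norm_num)]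
      ring_nf
    _ ≤ _ := rpow_mul_measureReal_le_setIntegral_rpow_one_sub_mul_rpow measurableSet_Icc
      measure_Icc_lt_top.ne h_subset integrable_stdGauss.integrableOn
      (integrable_piDensA hm0 a).integrableOn (.of_forall stdGauss_nonneg)
      (.of_forall (piDensA_nonneg hm0 a)) hlam (by positivity) (exp_pos _).le h_gauss h_pi

/-- For m ≥ 10, a ∈ [√(2 log 2)/m, 1] with a + 2/m ≤ 1, and λ ∈ [0,1],
∫_{−∞}^{m(1−a)/2} ν^{1−λ}π^λ ≥ e^{−λa²m²/2}/(10m). -/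
theorem unimodal_tempering_left_unnormalized_mass_lower_bound
    (m a : ℝ) (hm : 10 ≤ m)
    (ha : a ∈ Set.Icc (Real.sqrt (2 * Real.log 2) / m) 1)
    (ha2 : a + 2 / m ≤ 1)
    (lam : ℝ) (hlam : lam ∈ Set.Icc (0 : ℝ) 1) :
    Real.exp (-(lam * a ^ 2 * m ^ 2) / 2) / (10 * m)
      ≤ ∫ x in Set.Iic (m * (1 - a) / 2),
          (stdGauss x) ^ (1 - lam) * (piDensA m a x) ^ lam :=
  unimodal_tempering_left_unnormalized_mass_lower_bound_general m a (by linarith) ha.2 lam hlam
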